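/- (Main theorem, positive direction.) Let n ≥ 2, a > 0, and let s_1 < ⋯ < s_n be the Chebyshev-type points on [0,a]. Let L̄_i be the Lagrange basis polynomials without intercept at the nodes s_1,…,s_n, let ω_{i,1} < ⋯ < ω_{i,n−1} be the roots of L̄_i′, and set A_j = (ω_{1,j−1}, ω_{n,j}), j = 1,…,n, with ω_{1,0} = −∞, ω_{n,n} = +∞. Fix z ∈ ⋃_{j=1}^n A_j and set ω_i(z) = |L̄_i′(z)| / Σ_{k=1}^n |L̄_k′(z)| and h(z) = Σ_{k=1}^n |L̄_k′(z)|. Then the design ξ*(z) supported at s_1,…,s_n with weights ω_1(z),…,ω_n(z) is c-optimal for c = f′(z) = (1, 2z, …, n z^{n−1})ᵀ: for every design η on [0,a] and every v ∈ ℝⁿ with M(η)v = f′(z), one has f′(z)ᵀv ≥ h(z)², and there exists v* with M(ξ*(z))v* = f′(z) and f′(z)ᵀv* = h(z)². -/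

import Mathlib

open Finset Matrix Real

/-- The Chebyshev-type points `s_i = a (cos((n−i)π/n) + cos(π/(2n))) / (1 + cos(π/(2n)))`,
`i = 1, …, n`; these satisfy `0 < s_1 < ⋯ < s_n = a`. -/
noncomputable def chebPt (n : ℕ) (a : ℝ) (i : ℕ) : ℝ :=
  a * (Real.cos (((n : ℝ) - (i : ℝ)) * π / n) + Real.cos (π / (2 * n))) /
    (1 + Real.cos (π / (2 * n)))

/-- The Lagrange basis polynomials without intercept for nodes `s_1, …, s_n`:
`L̄_i(z) = z ∏_{j≠i}(z − s_j) / (s_i ∏_{j≠i}(s_i − s_j))`. -/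
noncomputable def Lbar (n : ℕ) (s : ℕ → ℝ) (i : ℕ) (z : ℝ) : ℝ :=
  (z * ∏ j ∈ (Finset.Icc 1 n).erase i, (z - s j)) /
    (s i * ∏ j ∈ (Finset.Icc 1 n).erase i, (s i - s j))

/-- The optimal weights `ω_i(z) = |L̄_i′(z)| / Σ_{k=1}^n |L̄_k′(z)|`. -/
noncomputable def slopeWeight (n : ℕ) (s : ℕ → ℝ) (z : ℝ) (i : ℕ) : ℝ :=
  |deriv (Lbar n s i) z| / ∑ k ∈ Finset.Icc 1 n, |deriv (Lbar n s k) z|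

/-- `h(z) = Σ_{k=1}^n |L̄_k′(z)|`. -/
noncomputable def slopeH (n : ℕ) (s : ℕ → ℝ) (z : ℝ) : ℝ :=
  ∑ k ∈ Finset.Icc 1 n, |deriv (Lbar n s k) z|

/-- The regression vector `f(x) = (x, x², …, xⁿ)ᵀ` of the degree-`n` polynomial model
without intercept. -/
def modelVec (n : ℕ) (x : ℝ) : Fin n → ℝ := fun i => x ^ (i.1 + 1)

/-- An approximate design on `[0, a]`: a probability measure with finite support
`x_1, …, x_m ⊆ [0, a]` and weights `ω_1, …, ω_m`. -/
structure Design (n : ℕ) (a : ℝ) where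
  m : ℕ
  pts : Fin m → ℝ
  wts : Fin m → ℝ
  pts_mem : ∀ i, pts i ∈ Set.Icc (0 : ℝ) a
  wts_nonneg : ∀ i, 0 ≤ wts i
  wts_sum : ∑ i, wts i = 1

/-- The information matrix `M(ξ) = Σᵢ ωᵢ f(xᵢ) f(xᵢ)ᵀ` of a design. -/
noncomputable def infoMatrix {n : ℕ} {a : ℝ} (ξ : Design n a) :
    Matrix (Fin n) (Fin n) ℝ :=
  ∑ i, ξ.wts i • Matrix.vecMulVec (modelVec n (ξ.pts i)) (modelVec n (ξ.pts i))

open Polynomial in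
/-- monic polynomial with roots `0` and `s j`, `j ∈ S` -/
noncomputable def PP (s : ℕ → ℝ) (S : Finset ℕ) : Polynomial ℝ := X * ∏ j ∈ S, (X - C (s j))

lemma sign_prod (S : Finset ℕ) (β : ℕ → ℝ) (x : ℝ) (K : ℕ)
    (h1 : ∀ l ∈ S, l ≤ K → β l < x) (h2 : ∀ l ∈ S, K < l → x < β l) :
    0 < (-1 : ℝ) ^ (S.filter (fun l => K < l)).card * ∏ l ∈ S, (x - β l) := by
  have : (-1 : ℝ) ^ (S.filter (fun l => K < l)).card = ∏ l ∈ S, (if K < l then (-1:ℝ) else 1) := by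
    rw [Finset.prod_ite]; simp
  rw [this, ← Finset.prod_mul_distrib]
  apply Finset.prod_pos
  intro l hl
  split_ifs with h
  · have := h2 l hl h; linarith
  · have := h1 l hl (by omega); linarith

lemma sign_prod' (S : Finset ℕ) (β : ℕ → ℝ) (x : ℝ) (K : ℕ)
    (h1 : ∀ l ∈ S, l ≤ K → β l ≤ x) (h2 : ∀ l ∈ S, K < l → x ≤ β l) :
    0 ≤ (-1 : ℝ) ^ (S.filter (fun l => K < l)).card * ∏ l ∈ S, (x - β l) := by
  have : (-1 : ℝ) ^ (S.filter (fun l => K < l)).card = ∏ l ∈ S, (if K < l then (-1:ℝ) else 1) := by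
    rw [Finset.prod_ite]; simp
  rw [this, ← Finset.prod_mul_distrib]
  apply Finset.prod_nonneg
  intro l hl
  split_ifs with h
  · have := h2 l hl h; linarith
  · have := h1 l hl (by omega); linarith

lemma card_Icc_filter (m K : ℕ) : ((Finset.Icc 1 m).filter (fun l => K < l)).card = m - K := by
  have : (Finset.Icc 1 m).filter (fun l => K < l) = Finset.Ioc K m := by
    ext l; simp only [Finset.mem_filter, Finset.mem_Icc, Finset.mem_Ioc]; omega
  rw [this]; simp

lemma card_Icc_erase_filter (m K : ℕ) :
    (((Finset.Icc 1 m).erase K).filter (fun l => K < l)).card = m - K := by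
  have : ((Finset.Icc 1 m).erase K).filter (fun l => K < l) = Finset.Ioc K m := by
    ext l; simp only [Finset.mem_filter, Finset.mem_Icc, Finset.mem_Ioc, Finset.mem_erase]; omega
  rw [this]; simp

/-- comparison of critical points from alternating signs -/
lemma root_compare (m : ℕ) (α β : ℕ → ℝ)
    (hα : ∀ k l, 1 ≤ k → k < l → l ≤ m → α k < α l)
    (hβ : ∀ k l, 1 ≤ k → k < l → l ≤ m → β k < β l)
    (hs : ∀ k, 1 ≤ k → k ≤ m → (-1 : ℝ) ^ (m - k) * ∏ l ∈ Finset.Icc 1 m, (α k - β l) < 0) :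
    ∀ k, 1 ≤ k → k ≤ m → α k < β k := by
  have key : ∀ d k, 1 ≤ k → k ≤ m → m - k < d → α k < β k := by
    intro d
    induction d with
    | zero => intro k _ _ h; omega
    | succ d ih =>
      intro k hk hkm hd
      by_contra hc
      push Not at hc
      have h := sign_prod' (Finset.Icc 1 m) β (α k) k ?_ ?_
      · rw [card_Icc_filter] at h
        linarith [hs k hk hkm]
      · intro l hl hlk
        rw [Finset.mem_Icc] at hl
        rcases hlk.lt_or_eq with h | h
        · exact (hβ l k hl.1 h hkm).le.trans hc
        · rw [h]; exact hc
      · intro l hl hlk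
        rw [Finset.mem_Icc] at hl
        exact ((hα k l hk hlk hl.2).trans (ih l hl.1 hl.2 (by omega))).le
  exact fun k h1 h2 => key _ k h1 h2 (Nat.lt_succ_self _)

open Polynomial in
lemma laguerre_step (R : Polynomial ℝ) (r x : ℝ) :
    (derivative ((X - C r) * R)).eval x ^ 2
      - ((X - C r) * R).eval x * (derivative (derivative ((X - C r) * R))).eval x
    = R.eval x ^ 2 + (x - r) ^ 2 *
      ((derivative R).eval x ^ 2 - R.eval x * (derivative (derivative R)).eval x) := by
  simp [derivative_mul]; ring

open Polynomial in
lemma laguerre (s : ℕ → ℝ) (S : Finset ℕ) (h0 : ∀ i ∈ S, s i ≠ 0)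
    (hinj : Set.InjOn s S) (x : ℝ) :
    0 < (derivative (PP s S)).eval x ^ 2
      - (PP s S).eval x * (derivative (derivative (PP s S))).eval x := by
  induction S using Finset.induction_on with
  | empty => simp [PP]
  | insert r S hr ih =>
    have e : PP s (insert r S) = (X - C (s r)) * PP s S := by
      unfold PP; rw [Finset.prod_insert hr]; ring
    have ih' := ih (fun i hi => h0 i (Finset.mem_insert_of_mem hi))
      (hinj.mono (by simp))
    rw [e, laguerre_step]
    by_cases hx : x = s r
    · have : (PP s S).eval x ≠ 0 := by
        unfold PP
        rw [eval_mul, eval_prod, eval_X]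
        refine mul_ne_zero (hx ▸ h0 r (by simp)) (Finset.prod_ne_zero_iff.mpr ?_)
        intro j hj hc
        simp only [eval_sub, eval_X, eval_C] at hc
        have : r = j := hinj (by simp) (by simp [hj]) (by linarith)
        exact hr (this ▸ hj)
      have h2 : 0 < (PP s S).eval x ^ 2 := by positivity
      have := mul_nonneg (sq_nonneg (x - s r)) ih'.le
      linarith
    · have : 0 < (x - s r) ^ 2 := by
        have := sub_ne_zero.mpr hx
        positivity
      have := mul_pos this ih'
      have := sq_nonneg ((PP s S).eval x)
      linarith

open Polynomial in
lemma PP_monic (s : ℕ → ℝ) (S : Finset ℕ) : (PP s S).Monic :=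
  monic_X.mul (monic_prod_of_monic _ _ (fun i _ => monic_X_sub_C _))

open Polynomial in
lemma PP_natDegree (s : ℕ → ℝ) (S : Finset ℕ) : (PP s S).natDegree = S.card + 1 := by
  unfold PP
  rw [Monic.natDegree_mul monic_X (monic_prod_of_monic _ _ (fun i _ => monic_X_sub_C _)),
    natDegree_prod_of_monic _ _ (fun i _ => monic_X_sub_C _)]
  simp; ring

open Polynomial in
lemma deriv_factor (s : ℕ → ℝ) (S : Finset ℕ) (m : ℕ) (hm : S.card = m) (w : ℕ → ℝ)
    (hw : ∀ k l, 1 ≤ k → k < l → l ≤ m → w k < w l)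
    (hr : ∀ k ∈ Finset.Icc 1 m, (derivative (PP s S)).eval (w k) = 0) :
    derivative (PP s S) = C ((m : ℝ) + 1) * ∏ k ∈ Finset.Icc 1 m, (X - C (w k)) := by
  have hinj : Set.InjOn w (Finset.Icc 1 m) := by
    intro k hk l hl h
    simp only [Finset.coe_Icc, Set.mem_Icc] at hk hl
    rcases lt_trichotomy k l with h' | h' | h'
    · have := hw k l hk.1 h' hl.2; linarith
    · exact h'
    · have := hw l k hl.1 h' hk.2; linarith
  have hmon : (∏ k ∈ Finset.Icc 1 m, (X - C (w k))).Monic :=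
    monic_prod_of_monic _ _ (fun i _ => monic_X_sub_C _)
  have hne : ((m : ℝ) + 1) ≠ 0 := by positivity
  have hd2 : (∏ k ∈ Finset.Icc 1 m, (X - C (w k))).natDegree = m := by
    rw [natDegree_prod_of_monic _ _ (fun i _ => monic_X_sub_C _)]; simp
  have hc1 : (derivative (PP s S)).coeff m = (m : ℝ) + 1 := by
    rw [coeff_derivative]
    have := PP_monic s S
    rw [Monic, leadingCoeff, PP_natDegree, hm] at this
    rw [this]; ring
  have hdeg1 : (derivative (PP s S)).natDegree ≤ m := by
    have := natDegree_derivative_le (PP s S)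
    rw [PP_natDegree, hm] at this
    simpa using this
  refine eq_of_degree_sub_lt_of_eval_index_eq (Finset.Icc 1 m) hinj ?_ ?_
  · simp only [Nat.card_Icc, Nat.add_sub_cancel]
    rw [degree_lt_iff_coeff_zero]
    intro k hk
    rw [coeff_sub, coeff_C_mul]
    rcases hk.lt_or_eq with h | h
    · rw [coeff_eq_zero_of_natDegree_lt (lt_of_le_of_lt hdeg1 h),
        coeff_eq_zero_of_natDegree_lt (by rw [hd2]; exact h)]; ring
    · rw [← h, hc1]
      have : (∏ k ∈ Finset.Icc 1 m, (X - C (w k))).coeff m = 1 := by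
        have h3 := hmon
        rw [Monic, leadingCoeff, hd2] at h3
        exact h3
      rw [this]; ring
  · intro k hk
    rw [hr k hk, eval_mul, eval_prod, Finset.prod_eq_zero hk (by simp)]; simp

open Polynomial in
/-- `P_i'(z)(z-s_i)+P_i(z) = W'(z)` -/
lemma PP_erase (s : ℕ → ℝ) (S : Finset ℕ) (i : ℕ) (hi : i ∈ S) (z : ℝ) :
    (derivative (PP s (S.erase i))).eval z * (z - s i) + (PP s (S.erase i)).eval z
      = (derivative (PP s S)).eval z ∧ (PP s S).eval z = (PP s (S.erase i)).eval z * (z - s i) := by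
  have e : PP s S = PP s (S.erase i) * (X - C (s i)) := by
    unfold PP; rw [mul_assoc, Finset.prod_erase_mul _ _ hi]
  constructor
  · rw [e]; simp [derivative_mul]
  · rw [e]; simp

lemma convex_sign (A B E z r t q : ℝ) (hA : 0 < A) (hB : 0 < B) (h1 : r < t) (h2 : t < q)
    (comb : E * (z - t) ^ 2 * (q - r) = A * (z - r) ^ 2 * (q - t) + B * (z - q) ^ 2 * (t - r)) :
    0 < E := by
  have u1 : 0 < q - t := by linarith
  have u2 : 0 < t - r := by linarith
  have u3 : 0 < q - r := by linarith
  have pos : 0 < A * (z - r) ^ 2 * (q - t) + B * (z - q) ^ 2 * (t - r) := by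
    by_cases hz1 : z = r
    · have h3 : z - q ≠ 0 := by rw [hz1]; exact (sub_neg.mpr (h1.trans h2)).ne
      have h4 : 0 < B * (z - q) ^ 2 * (t - r) := by positivity
      have h5 : 0 ≤ A * (z - r) ^ 2 * (q - t) := by positivity
      linarith
    · have h3 : z - r ≠ 0 := sub_ne_zero.mpr hz1
      have h4 : 0 ≤ B * (z - q) ^ 2 * (t - r) := by positivity
      have h5 : 0 < A * (z - r) ^ 2 * (q - t) := by positivity
      linarith
  have pos2 : 0 < E * ((z - t) ^ 2 * (q - r)) := by linarith
  exact pos_of_mul_pos_left pos2 (by positivity)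

set_option maxHeartbeats 2000000 in
open Polynomial in
/-- the common sign of all `P_i'(z)` -/
lemma common_sign (n : ℕ) (hn : 2 ≤ n) (s : ℕ → ℝ) (hs0 : ∀ i ∈ Finset.Icc 1 n, 0 < s i)
    (hsm : ∀ k l, 1 ≤ k → k < l → l ≤ n → s k < s l)
    (ω : ℕ → ℕ → ℝ)
    (hωmono : ∀ i ∈ Finset.Icc 1 n,
      ∀ k l, 1 ≤ k → k < l → l ≤ n - 1 → ω i k < ω i l)
    (hωroot : ∀ i ∈ Finset.Icc 1 n, ∀ k ∈ Finset.Icc 1 (n - 1),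
      (derivative (PP s ((Finset.Icc 1 n).erase i))).eval (ω i k) = 0)
    (z : ℝ) (j : ℕ) (hj : j ∈ Finset.Icc 1 n) (hz1 : 1 < j → ω 1 (j - 1) < z)
    (hz2 : j < n → z < ω n j) :
    ∀ i ∈ Finset.Icc 1 n,
      0 < (-1 : ℝ) ^ (n - j) * (derivative (PP s ((Finset.Icc 1 n).erase i))).eval z := by
  rw [Finset.mem_Icc] at hj
  have m1 : 1 ∈ Finset.Icc 1 n := by simp; omega
  have mn : n ∈ Finset.Icc 1 n := by simp; omega
  have hcard : ∀ i ∈ Finset.Icc 1 n, ((Finset.Icc 1 n).erase i).card = n - 1 := by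
    intro i hi; rw [Finset.card_erase_of_mem hi]; simp
  have fac : ∀ i ∈ Finset.Icc 1 n, _ := fun i hi =>
    deriv_factor s _ (n - 1) (hcard i hi) (ω i) (hωmono i hi) (hωroot i hi)
  have hsinj : Set.InjOn s (Finset.Icc 1 n) := by
    intro k hk l hl h
    simp only [Finset.coe_Icc, Set.mem_Icc] at hk hl
    rcases lt_trichotomy k l with h' | h' | h'
    · have := hsm k l hk.1 h' hl.2; linarith
    · exact h'
    · have := hsm l k hl.1 h' hk.2; linarith
  have h1n : s 1 < s n := hsm 1 n le_rfl (by omega) le_rfl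
  have hnpos : (0:ℝ) < ((n - 1 : ℕ) : ℝ) + 1 := by positivity
  have cmp : ∀ k, 1 ≤ k → k ≤ n - 1 → ω n k < ω 1 k := by
    refine root_compare (n - 1) (ω n) (ω 1) (hωmono n mn) (hωmono 1 m1) ?_
    intro k hk1 hk2
    have hk : k ∈ Finset.Icc 1 (n - 1) := Finset.mem_Icc.mpr ⟨hk1, hk2⟩
    have hr := hωroot n mn k hk
    have lag := laguerre s ((Finset.Icc 1 n).erase n)
      (fun i hi => (hs0 i (Finset.mem_of_mem_erase hi)).ne')
      (hsinj.mono (Finset.coe_subset.mpr (Finset.erase_subset _ _))) (ω n k)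
    rw [hr] at lag
    -- second derivative
    have h2 : (derivative (derivative (PP s ((Finset.Icc 1 n).erase n)))).eval (ω n k)
        = (((n - 1 : ℕ) : ℝ) + 1) * ∏ l ∈ (Finset.Icc 1 (n - 1)).erase k, (ω n k - ω n l) := by
      rw [fac n mn, ← Finset.mul_prod_erase _ _ hk]
      simp [derivative_mul, eval_prod]
    have sg := sign_prod ((Finset.Icc 1 (n - 1)).erase k) (ω n) (ω n k) k ?_ ?_
    rotate_left
    · intro l hl hlk
      simp only [Finset.mem_erase, Finset.mem_Icc] at hl
      exact hωmono n mn l k (by omega) (by omega) hk2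
    · intro l hl hlk
      simp only [Finset.mem_erase, Finset.mem_Icc] at hl
      exact hωmono n mn k l (by omega) (by omega) (by omega)
    rw [card_Icc_erase_filter] at sg
    rw [h2] at lag
    have e1 : (derivative (PP s ((Finset.Icc 1 n).erase 1))).eval (ω n k)
        = (((n - 1 : ℕ) : ℝ) + 1) * ∏ l ∈ (Finset.Icc 1 (n - 1)), (ω n k - ω 1 l) := by
      rw [fac 1 m1]
      simp [eval_prod]
    obtain ⟨a1, a2⟩ := PP_erase s (Finset.Icc 1 n) 1 m1 (ω n k)
    obtain ⟨b1, b2⟩ := PP_erase s (Finset.Icc 1 n) n mn (ω n k)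
    rw [hr] at b1
    rw [e1] at a1
    set Q := ∏ l ∈ (Finset.Icc 1 (n - 1)), (ω n k - ω 1 l)
    set D := ∏ l ∈ (Finset.Icc 1 (n - 1)).erase k, (ω n k - ω n l)
    set p := (PP s ((Finset.Icc 1 n).erase n)).eval (ω n k)
    set q := (PP s ((Finset.Icc 1 n).erase 1)).eval (ω n k)
    set N := ((n - 1 : ℕ) : ℝ) + 1
    set u := (-1 : ℝ) ^ (n - 1 - k)
    set y := ω n k
    have key : N * Q * (y - s 1) ^ 2 = p * (s n - s 1) := by
      linear_combination (y - s 1) * (a1 - b1) + a2 - b2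
    -- u*D>0, p*N*D<0
    by_contra hc
    push Not at hc
    have hu : u * u = 1 := by
      rw [← mul_pow]; simp
    have hpD : p * D < 0 := by nlinarith
    have t1 : 0 ≤ (u * Q) * (u * D) := mul_nonneg hc sg.le
    have t2 : (u * Q) * (u * D) = Q * D := by linear_combination Q * D * hu
    have t3 : N * (y - s 1) ^ 2 * (Q * D) = (p * D) * (s n - s 1) := by
      linear_combination D * key
    have t4 : 0 ≤ N * (y - s 1) ^ 2 * (Q * D) := by
      rw [← t2]; positivity
    have t5 := mul_neg_of_neg_of_pos hpD (sub_pos.mpr h1n)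
    linarith
  have mono_le : ∀ i ∈ Finset.Icc 1 n, ∀ k l, 1 ≤ k → k ≤ l → l ≤ n - 1 → ω i k ≤ ω i l := by
    intro i hi k l h1 h2 h3
    rcases h2.lt_or_eq with h | h
    · exact (hωmono i hi k l h1 h h3).le
    · rw [h]
  have main : ∀ i ∈ Finset.Icc 1 n, (1 < j → ω i (j - 1) < z) → (j < n → z < ω i j) →
      0 < (-1 : ℝ) ^ (n - j) * (derivative (PP s ((Finset.Icc 1 n).erase i))).eval z := by
    intro i hi g1 g2
    have sg := sign_prod (Finset.Icc 1 (n - 1)) (ω i) z (j - 1) ?_ ?_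
    · rw [card_Icc_filter, show n - 1 - (j - 1) = n - j by omega] at sg
      rw [fac i hi]
      simp only [eval_mul, eval_C, eval_prod, eval_sub, eval_X]
      have := mul_pos hnpos sg
      linarith
    · intro l hl hlj
      rw [Finset.mem_Icc] at hl
      exact (mono_le i hi l (j - 1) hl.1 hlj (by omega)).trans_lt (g1 (by omega))
    · intro l hl hlj
      rw [Finset.mem_Icc] at hl
      exact (g2 (by omega)).trans_le (mono_le i hi j l hj.1 (by omega) hl.2)
  have p1 := main 1 m1 hz1 (fun h => (hz2 h).trans (cmp j hj.1 (by omega)))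
  have pn := main n mn (fun h => (cmp (j - 1) (by omega) (by omega)).trans (hz1 h)) hz2
  intro i hi
  by_cases hi1 : i = 1
  · rw [hi1]; exact p1
  by_cases hin : i = n
  · rw [hin]; exact pn
  have hi' := Finset.mem_Icc.mp hi
  have s1i := hsm 1 i le_rfl (by omega) hi'.2
  have sin := hsm i n hi'.1 (by omega) le_rfl
  obtain ⟨a1, a2⟩ := PP_erase s (Finset.Icc 1 n) 1 m1 z
  obtain ⟨b1, b2⟩ := PP_erase s (Finset.Icc 1 n) n mn z
  obtain ⟨c1, c2⟩ := PP_erase s (Finset.Icc 1 n) i hi z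
  set ε := (-1 : ℝ) ^ (n - j)
  set d1 := (derivative (PP s ((Finset.Icc 1 n).erase 1))).eval z
  set dn := (derivative (PP s ((Finset.Icc 1 n).erase n))).eval z
  set di := (derivative (PP s ((Finset.Icc 1 n).erase i))).eval z
  set W' := (derivative (PP s (Finset.Icc 1 n))).eval z
  set W := (PP s (Finset.Icc 1 n)).eval z
  have k1 : d1 * (z - s 1) ^ 2 = W' * (z - s 1) - W := by
    linear_combination (z - s 1) * a1 + a2
  have kn : dn * (z - s n) ^ 2 = W' * (z - s n) - W := by
    linear_combination (z - s n) * b1 + b2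
  have ki : di * (z - s i) ^ 2 = W' * (z - s i) - W := by
    linear_combination (z - s i) * c1 + c2
  have comb : ε * di * (z - s i) ^ 2 * (s n - s 1) =
      ε * d1 * (z - s 1) ^ 2 * (s n - s i) + ε * dn * (z - s n) ^ 2 * (s i - s 1) := by
    linear_combination ε * (s n - s 1) * ki - ε * (s n - s i) * k1 - ε * (s i - s 1) * kn
  exact convex_sign _ _ _ z (s 1) (s i) (s n) p1 pn s1i sin comb

open Polynomial in
lemma PP_eval (s : ℕ → ℝ) (S : Finset ℕ) (z : ℝ) :
    (PP s S).eval z = z * ∏ j ∈ S, (z - s j) := by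
  simp [PP, eval_prod]

open Polynomial in
lemma deriv_Lbar (n : ℕ) (s : ℕ → ℝ) (i : ℕ) (z : ℝ) :
    deriv (Lbar n s i) z = (derivative (PP s ((Finset.Icc 1 n).erase i))).eval z /
      (PP s ((Finset.Icc 1 n).erase i)).eval (s i) := by
  have : Lbar n s i = fun z => (PP s ((Finset.Icc 1 n).erase i)).eval z /
      (PP s ((Finset.Icc 1 n).erase i)).eval (s i) := by
    funext z; simp only [Lbar, PP_eval]
  rw [this, deriv_div_const, Polynomial.deriv]

open Polynomial in
lemma denom_sign (n : ℕ) (s : ℕ → ℝ) (hs0 : ∀ i ∈ Finset.Icc 1 n, 0 < s i)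
    (hsm : ∀ k l, 1 ≤ k → k < l → l ≤ n → s k < s l) (i : ℕ) (hi : i ∈ Finset.Icc 1 n) :
    0 < (-1 : ℝ) ^ (n - i) * (PP s ((Finset.Icc 1 n).erase i)).eval (s i) := by
  have hi' := Finset.mem_Icc.mp hi
  have sg := sign_prod ((Finset.Icc 1 n).erase i) s (s i) i ?_ ?_
  · rw [card_Icc_erase_filter] at sg
    rw [PP_eval]
    have := mul_pos (hs0 i hi) sg
    linarith
  · intro l hl hli
    simp only [Finset.mem_erase, Finset.mem_Icc] at hl
    exact hsm l i (by omega) (by omega) (by omega)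
  · intro l hl hli
    simp only [Finset.mem_erase, Finset.mem_Icc] at hl
    exact hsm i l (by omega) (by omega) (by omega)

open Polynomial in
lemma interp (n : ℕ) (s : ℕ → ℝ) (hs0 : ∀ i ∈ Finset.Icc 1 n, 0 < s i)
    (hsm : ∀ k l, 1 ≤ k → k < l → l ≤ n → s k < s l) (p : Polynomial ℝ)
    (hp : p.natDegree ≤ n) (hp0 : p.eval 0 = 0) (z : ℝ) :
    (derivative p).eval z = ∑ i ∈ Finset.Icc 1 n, p.eval (s i) * deriv (Lbar n s i) z := by
  have hD : ∀ i ∈ Finset.Icc 1 n, (PP s ((Finset.Icc 1 n).erase i)).eval (s i) ≠ 0 := by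
    intro i hi h
    have := denom_sign n s hs0 hsm i hi
    rw [h] at this; simp at this
  have key : p = ∑ i ∈ Finset.Icc 1 n, C (p.eval (s i) /
      (PP s ((Finset.Icc 1 n).erase i)).eval (s i)) * PP s ((Finset.Icc 1 n).erase i) := by
    have hv : Set.InjOn (fun k => if k = 0 then (0:ℝ) else s k) (Finset.range (n + 1)) := by
      intro k hk l hl h
      simp only [Finset.coe_range, Set.mem_Iio] at hk hl
      by_cases hk0 : k = 0 <;> by_cases hl0 : l = 0
      · rw [hk0, hl0]
      · have := hs0 l (by simp; omega)
        simp [hk0, hl0] at h; linarith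
      · have := hs0 k (by simp; omega)
        simp [hk0, hl0] at h; linarith
      · simp only [hk0, hl0, if_false] at h
        rcases lt_trichotomy k l with h' | h' | h'
        · have := hsm k l (by omega) h' (by omega); linarith
        · exact h'
        · have := hsm l k (by omega) h' (by omega); linarith
    refine eq_of_degrees_lt_of_eval_index_eq (Finset.range (n + 1)) hv ?_ ?_ ?_
    · rw [Finset.card_range]
      exact lt_of_le_of_lt degree_le_natDegree (by exact_mod_cast Nat.lt_succ_of_le hp)
    · rw [Finset.card_range]
      refine lt_of_le_of_lt (degree_sum_le _ _) ?_
      rw [Finset.sup_lt_iff (by exact WithBot.bot_lt_coe _)]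
      intro i hi
      refine lt_of_le_of_lt degree_le_natDegree ?_
      have h1 := natDegree_C_mul_le (p.eval (s i) /
        (PP s ((Finset.Icc 1 n).erase i)).eval (s i)) (PP s ((Finset.Icc 1 n).erase i))
      rw [PP_natDegree, Finset.card_erase_of_mem hi] at h1
      simp only [Nat.card_Icc, Nat.add_sub_cancel] at h1
      have := Finset.mem_Icc.mp hi
      have h2 := lt_of_le_of_lt h1 (show n - 1 + 1 < n + 1 by omega)
      exact_mod_cast h2
    · intro k hk
      rw [Finset.mem_range] at hk
      rw [eval_finsetSum]
      by_cases hk0 : k = 0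
      · simp [hk0, hp0, PP_eval]
      · have hkm : k ∈ Finset.Icc 1 n := by simp; omega
        simp only [hk0, if_false]
        rw [Finset.sum_eq_single k]
        · rw [eval_mul, eval_C, div_mul_cancel₀ _ (hD k hkm)]
        · intro i hi hik
          rw [eval_mul, PP_eval _ _ (s k), Finset.prod_eq_zero
            (Finset.mem_erase.mpr ⟨Ne.symm hik, hkm⟩) (sub_self _)]
          ring
        · intro h; exact absurd hkm h
  conv_lhs => rw [key]
  rw [derivative_sum, eval_finsetSum]
  refine Finset.sum_congr rfl fun i hi => ?_
  rw [deriv_Lbar]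
  simp
  ring

lemma n_pos_cos (n : ℕ) (hn : 2 ≤ n) : 0 < 1 + Real.cos (π / (2 * n)) := by
  have h2 : (2:ℝ) ≤ n := by exact_mod_cast hn
  have : 0 < Real.cos (π / (2 * n)) := by
    apply Real.cos_pos_of_mem_Ioo
    constructor
    · have : 0 < π / (2 * n) := by have := Real.pi_pos; positivity
      linarith [Real.pi_pos]
    · rw [div_lt_div_iff₀ (by positivity) (by norm_num)]
      nlinarith [Real.pi_pos]
  linarith

lemma cheb_pos (n : ℕ) (hn : 2 ≤ n) (a : ℝ) (ha : 0 < a) :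
    ∀ i ∈ Finset.Icc 1 n, 0 < chebPt n a i := by
  intro i hi
  rw [Finset.mem_Icc] at hi
  have h2 : (2:ℝ) ≤ n := by exact_mod_cast hn
  have hi1 : (1:ℝ) ≤ i := by exact_mod_cast hi.1
  have hi2 : (i:ℝ) ≤ n := by exact_mod_cast hi.2
  have hpi := Real.pi_pos
  unfold chebPt
  refine div_pos (mul_pos ha ?_) (n_pos_cos n hn)
  have : Real.cos (π - π / (2 * n)) < Real.cos (((n : ℝ) - (i : ℝ)) * π / n) := by
    apply Real.cos_lt_cos_of_nonneg_of_le_pi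
    · have : 0 ≤ (n : ℝ) - i := by linarith
      positivity
    · have : 0 < π / (2 * n) := by positivity
      linarith
    · have e : π - π / (2 * n) = (n - 1 / 2) * π / n := by field_simp
      rw [e]
      apply div_lt_div_of_pos_right _ (by positivity)
      nlinarith
  rw [Real.cos_pi_sub] at this
  linarith

lemma cheb_mono (n : ℕ) (hn : 2 ≤ n) (a : ℝ) (ha : 0 < a) :
    ∀ k l, 1 ≤ k → k < l → l ≤ n → chebPt n a k < chebPt n a l := by
  intro k l hk hkl hl
  have h2 : (2:ℝ) ≤ n := by exact_mod_cast hn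
  have hk1 : (1:ℝ) ≤ k := by exact_mod_cast hk
  have hkl' : (k:ℝ) < l := by exact_mod_cast hkl
  have hl2 : (l:ℝ) ≤ n := by exact_mod_cast hl
  have hpi := Real.pi_pos
  unfold chebPt
  refine div_lt_div_of_pos_right (mul_lt_mul_of_pos_left ?_ ha) (n_pos_cos n hn)
  have : Real.cos (((n : ℝ) - (k : ℝ)) * π / n) < Real.cos (((n : ℝ) - (l : ℝ)) * π / n) := by
    apply Real.cos_lt_cos_of_nonneg_of_le_pi
    · have : 0 ≤ (n : ℝ) - l := by linarith
      positivity
    · rw [div_le_iff₀ (by positivity)]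
      nlinarith
    · apply div_lt_div_of_pos_right _ (by positivity)
      nlinarith
  linarith

open Polynomial in
/-- the equioscillating polynomial -/
lemma exists_T (n : ℕ) (hn : 2 ≤ n) (a : ℝ) (ha : 0 < a) :
    ∃ p : Polynomial ℝ, p.natDegree ≤ n ∧ p.eval 0 = 0 ∧
      (∀ i ∈ Finset.Icc 1 n, p.eval (chebPt n a i) = (-1) ^ (n - i)) ∧
      ∀ x ∈ Set.Icc 0 a, p.eval x ^ 2 ≤ 1 := by
  have hc := n_pos_cos n hn
  have h2 : (2:ℝ) ≤ n := by exact_mod_cast hn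
  have hn0 : (n:ℝ) ≠ 0 := by positivity
  set c := Real.cos (π / (2 * n)) with hcdef
  have ev : ∀ x, ((Chebyshev.T ℝ n).comp (C ((1 + c) / a) * X - C c)).eval x
      = (Chebyshev.T ℝ n).eval ((1 + c) / a * x - c) := by
    intro x; simp [eval_comp]
  refine ⟨(Chebyshev.T ℝ n).comp (C ((1 + c) / a) * X - C c), ?_, ?_, ?_, ?_⟩
  · rw [natDegree_comp, Chebyshev.natDegree_T]
    have : (C ((1 + c) / a) * X - C c).natDegree ≤ 1 := by
      compute_degree
    simpa using Nat.mul_le_mul_left n this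
  · rw [ev]
    have : (1 + c) / a * 0 - c = Real.cos (π - π / (2 * n)) := by
      rw [Real.cos_pi_sub, hcdef]; ring
    rw [this, Chebyshev.T_real_cos]
    have e : ((n:ℤ):ℝ) * (π - π / (2 * n)) = n * π - π / 2 := by
      push_cast; field_simp
    rw [e, Real.cos_sub_pi_div_two, Real.sin_nat_mul_pi]
  · intro i hi
    have hi' := Finset.mem_Icc.mp hi
    rw [ev]
    have : (1 + c) / a * chebPt n a i - c = Real.cos (((n : ℝ) - (i : ℝ)) * π / n) := by
      unfold chebPt
      rw [← hcdef]
      field_simp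
      ring
    rw [this, Chebyshev.T_real_cos]
    have e : ((n:ℤ):ℝ) * (((n : ℝ) - (i : ℝ)) * π / n) = ((n - i : ℕ) : ℝ) * π := by
      rw [Nat.cast_sub hi'.2]; push_cast; field_simp
    rw [e, Real.cos_nat_mul_pi]
  · intro x hx
    rw [ev]
    have hle : c ≤ 1 := Real.cos_le_one _
    have b1 : 0 ≤ (1 + c) / a * x := mul_nonneg (by positivity) hx.1
    have b2 : (1 + c) / a * x ≤ 1 + c := by
      rw [div_mul_eq_mul_div, div_le_iff₀ ha]
      exact mul_le_mul_of_nonneg_left hx.2 hc.le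
    rw [← Real.cos_arccos (x := (1 + c) / a * x - c) (by linarith) (by linarith),
      Chebyshev.T_real_cos]
    exact Real.cos_sq_le_one _

open Polynomial in
lemma coeff_dot (n : ℕ) (p : Polynomial ℝ) (hp : p.natDegree ≤ n) (hp0 : p.eval 0 = 0) (x : ℝ) :
    (modelVec n x) ⬝ᵥ (fun i : Fin n => p.coeff (i.1 + 1)) = p.eval x := by
  rw [eval_eq_sum_range' (Nat.lt_succ_of_le hp), Finset.sum_range_succ', Finset.sum_range]
  rw [← coeff_zero_eq_eval_zero] at hp0
  simp only [dotProduct, modelVec, hp0, zero_mul, add_zero]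
  exact Finset.sum_congr rfl fun i _ => mul_comm _ _

open Polynomial in
lemma coeff_dot' (n : ℕ) (hn : 2 ≤ n) (p : Polynomial ℝ) (hp : p.natDegree ≤ n) (z : ℝ) :
    (fun i : Fin n => ((i.1 : ℝ) + 1) * z ^ (i.1)) ⬝ᵥ (fun i : Fin n => p.coeff (i.1 + 1))
      = (derivative p).eval z := by
  have hd : (derivative p).natDegree < n := by
    have := natDegree_derivative_le p
    omega
  rw [eval_eq_sum_range' hd, Finset.sum_range]
  simp only [dotProduct, coeff_derivative]
  exact Finset.sum_congr rfl fun i _ => by ring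

lemma mulVec_sum {ι : Type*} (n : ℕ) (S : Finset ι) (w : ι → ℝ) (x : ι → ℝ) (v : Fin n → ℝ) :
    (∑ i ∈ S, w i • Matrix.vecMulVec (modelVec n (x i)) (modelVec n (x i))).mulVec v
      = ∑ i ∈ S, (w i * (modelVec n (x i) ⬝ᵥ v)) • modelVec n (x i) := by
  rw [Matrix.sum_mulVec]
  refine Finset.sum_congr rfl fun i _ => ?_
  rw [Matrix.smul_mulVec, Matrix.vecMulVec_mulVec]
  ext k
  simp
  ring


/-- **Main theorem, positive direction.** For `z ∈ ⋃_{j=1}^n A_j`, the design supported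
at the Chebyshev-type points `s_1, …, s_n` with weights `ω_i(z)` is `c`-optimal for
`c = f′(z) = (1, 2z, …, n z^{n−1})ᵀ`, with optimal value `h(z)²`. -/
theorem stmt_15 (n : ℕ) (hn : 2 ≤ n) (a : ℝ) (ha : 0 < a)
    (ω : ℕ → ℕ → ℝ)
    (hωmono : ∀ i ∈ Finset.Icc 1 n,
      ∀ k l, 1 ≤ k → k < l → l ≤ n - 1 → ω i k < ω i l)
    (hωroot : ∀ i ∈ Finset.Icc 1 n, ∀ x : ℝ,
      deriv (Lbar n (chebPt n a) i) x = 0 ↔ ∃ k ∈ Finset.Icc 1 (n - 1), x = ω i k)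
    (z : ℝ)
    (hz : ∃ j ∈ Finset.Icc 1 n, (1 < j → ω 1 (j - 1) < z) ∧ (j < n → z < ω n j)) :
    (∀ (η : Design n a) (v : Fin n → ℝ),
      (infoMatrix η).mulVec v = (fun i : Fin n => ((i.1 : ℝ) + 1) * z ^ (i.1)) →
      slopeH n (chebPt n a) z ^ 2 ≤ (fun i : Fin n => ((i.1 : ℝ) + 1) * z ^ (i.1)) ⬝ᵥ v) ∧
    (∃ v : Fin n → ℝ,
      (∑ i ∈ Finset.Icc 1 n, slopeWeight n (chebPt n a) z i •
          Matrix.vecMulVec (modelVec n (chebPt n a i)) (modelVec n (chebPt n a i))).mulVec v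
        = (fun i : Fin n => ((i.1 : ℝ) + 1) * z ^ (i.1)) ∧
      (fun i : Fin n => ((i.1 : ℝ) + 1) * z ^ (i.1)) ⬝ᵥ v = slopeH n (chebPt n a) z ^ 2) := by
  have hs0 := cheb_pos n hn a ha
  have hsm := cheb_mono n hn a ha
  obtain ⟨p, hp, hp0, hps, hpb⟩ := exists_T n hn a ha
  obtain ⟨j, hj, hz1, hz2⟩ := hz
  set s := chebPt n a with hs
  have hden := denom_sign n s hs0 hsm
  have hroot' : ∀ i ∈ Finset.Icc 1 n, ∀ k ∈ Finset.Icc 1 (n - 1),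
      (Polynomial.derivative (PP s ((Finset.Icc 1 n).erase i))).eval (ω i k) = 0 := by
    intro i hi k hk
    have h := (hωroot i hi (ω i k)).mpr ⟨k, hk, rfl⟩
    rw [deriv_Lbar, div_eq_zero_iff] at h
    refine h.resolve_right fun h' => ?_
    have := hden i hi
    rw [h'] at this; simp at this
  have hsgn := common_sign n hn s hs0 hsm ω hωmono hroot' z j hj hz1 hz2
  set ε := (-1 : ℝ) ^ (n - j)
  have hε : ε * ε = 1 := by rw [← mul_pow]; simp
  have habs : ∀ i ∈ Finset.Icc 1 n,
      |deriv (Lbar n s i) z| = ε * ((-1) ^ (n - i) * deriv (Lbar n s i) z) := by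
    intro i hi
    have hp1 := div_pos (hsgn i hi) (hden i hi)
    have hδ : ((-1 : ℝ) ^ (n - i)) * (-1) ^ (n - i) = 1 := by rw [← mul_pow]; simp
    rw [deriv_Lbar]
    set d := (Polynomial.derivative (PP s ((Finset.Icc 1 n).erase i))).eval z
    set D := (PP s ((Finset.Icc 1 n).erase i)).eval (s i)
    set δ := (-1 : ℝ) ^ (n - i)
    have e : ε * d / (δ * D) = ε * (δ * (d / D)) := by
      have hδ0 : δ ≠ 0 := by intro h; rw [h] at hδ; simp at hδ
      have : δ⁻¹ = δ := by field_simp; linarith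
      rw [mul_div_mul_comm, div_eq_mul_inv ε δ, this]; ring
    rw [← e, ← abs_of_pos hp1, e, abs_mul, abs_mul]
    have a1 : |ε| = 1 := by simp [ε, abs_pow]
    have a2 : |δ| = 1 := by simp [δ, abs_pow]
    rw [a1, a2]; ring
  have hH : slopeH n s z = ε * (Polynomial.derivative p).eval z := by
    rw [interp n s hs0 hsm p hp hp0, slopeH, Finset.mul_sum]
    refine Finset.sum_congr rfl fun i hi => ?_
    rw [habs i hi, hps i hi]
  have hvec : ∀ k : Fin n, ∑ i ∈ Finset.Icc 1 n, s i ^ (k.1 + 1) * deriv (Lbar n s i) z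
      = ((k.1 : ℝ) + 1) * z ^ k.1 := by
    intro k
    have := interp n s hs0 hsm (Polynomial.X ^ (k.1 + 1))
      (by rw [Polynomial.natDegree_X_pow]; exact k.2) (by simp) z
    simp only [Polynomial.eval_pow, Polynomial.eval_X] at this
    rw [← this]; simp
  have hHpos : slopeH n s z ≠ 0 := by
    intro h0
    have hall : ∀ i ∈ Finset.Icc 1 n, |deriv (Lbar n s i) z| = 0 :=
      (Finset.sum_eq_zero_iff_of_nonneg (fun i _ => abs_nonneg _)).mp h0
    have := hvec ⟨0, by omega⟩
    rw [Finset.sum_eq_zero] at this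
    · simp at this
    · intro i hi
      rw [abs_eq_zero.mp (hall i hi), mul_zero]
  have hct := coeff_dot' n hn p hp z
  have hxt := coeff_dot n p hp hp0
  set t : Fin n → ℝ := fun i => p.coeff (i.1 + 1)
  set c : Fin n → ℝ := fun i => ((i.1 : ℝ) + 1) * z ^ (i.1)
  set dT := (Polynomial.derivative p).eval z
  have hH2 : slopeH n s z ^ 2 = dT ^ 2 := by
    rw [hH]; linear_combination dT ^ 2 * hε
  constructor
  · intro η v hv
    rw [infoMatrix, mulVec_sum] at hv
    have e1 : c ⬝ᵥ v = ∑ i, η.wts i * (modelVec n (η.pts i) ⬝ᵥ v) ^ 2 := by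
      rw [← hv, sum_dotProduct]
      refine Finset.sum_congr rfl fun i _ => ?_
      rw [smul_dotProduct, smul_eq_mul]; ring
    have e2 : dT = ∑ i, η.wts i * ((modelVec n (η.pts i) ⬝ᵥ v) * p.eval (η.pts i)) := by
      rw [← hct, ← hv, sum_dotProduct]
      refine Finset.sum_congr rfl fun i _ => ?_
      rw [smul_dotProduct, smul_eq_mul, hxt]; ring
    have e3 : ∑ i, η.wts i * p.eval (η.pts i) ^ 2 ≤ 1 := by
      rw [← η.wts_sum]
      refine Finset.sum_le_sum fun i _ => ?_
      exact mul_le_of_le_one_right (η.wts_nonneg i) (hpb _ (η.pts_mem i))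
    have e4 : 0 ≤ ∑ i, η.wts i * ((modelVec n (η.pts i) ⬝ᵥ v) - dT * p.eval (η.pts i)) ^ 2 :=
      Finset.sum_nonneg fun i _ => mul_nonneg (η.wts_nonneg i) (sq_nonneg _)
    have e5 : ∑ i, η.wts i * ((modelVec n (η.pts i) ⬝ᵥ v) - dT * p.eval (η.pts i)) ^ 2
        = c ⬝ᵥ v - 2 * dT * dT + dT ^ 2 * ∑ i, η.wts i * p.eval (η.pts i) ^ 2 := by
      conv_rhs => rw [e1]; enter [1, 2, 2]; rw [e2]
      rw [Finset.mul_sum, Finset.mul_sum, ← Finset.sum_sub_distrib, ← Finset.sum_add_distrib]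
      exact Finset.sum_congr rfl fun i _ => by ring
    rw [hH2]
    nlinarith [mul_le_mul_of_nonneg_left e3 (sq_nonneg dT)]
  · refine ⟨(ε * slopeH n s z) • t, ?_, ?_⟩
    · rw [mulVec_sum]
      ext k
      rw [Finset.sum_apply]
      show _ = ((k.1 : ℝ) + 1) * z ^ k.1
      rw [← hvec k]
      refine Finset.sum_congr rfl fun i hi => ?_
      rw [dotProduct_smul, hxt, hps i hi, Pi.smul_apply, smul_eq_mul, smul_eq_mul, slopeWeight,
        habs i hi]
      change ε * ((-1) ^ (n - i) * deriv (Lbar n s i) z) / slopeH n s z *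
        (ε * slopeH n s z * (-1) ^ (n - i)) * s i ^ (k.1 + 1) = _
      have hδ : ((-1 : ℝ) ^ (n - i)) * (-1) ^ (n - i) = 1 := by rw [← mul_pow]; simp
      set δ := (-1 : ℝ) ^ (n - i)
      have : ε * (δ * deriv (Lbar n s i) z) / slopeH n s z * (ε * slopeH n s z * δ) =
          (ε * ε) * (δ * δ) * deriv (Lbar n s i) z := by
        field_simp
      rw [this, hε, hδ]; ring
    · rw [dotProduct_smul, hct, smul_eq_mul, sq]
      conv_rhs => enter [2]; rw [hH]
      ring
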